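/- arXiv:1307.2152 — 6 statements merged into one kernel-verified Lean document; each statement's English description precedes it below -/
import Mathlib

section
/- Let α : I₁ → ℂ and ω : I₂ → ℂ be regular C¹ curves (α' and ω' never vanish) and Φ = α∗ω. Then for (t,s) ∈ I₁×I₂, the vectors Φ_t(t,s) and Φ_s(t,s) are linearly independent over ℝ in ℂ² ≅ ℝ⁴ if and only if (α(t), ω(s)) ≠ (0,0); in particular, if α and ω avoid the origin then Φ is an immersion, and (t*,s*) is a singular point of Φ if and only if α(t*) = 0 = ω(s*). -/
open Complex

/-- The Lagrangian immersion `Φ = α ∗ ω` constructed from two planar curves. -/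
noncomputable def starProd (α ω : ℝ → ℂ) (t₀ s₀ t s : ℝ) : ℂ × ℂ :=
  ((∫ y in s₀..s, deriv ω y * (starRingEnd ℂ) (ω y)) -
    (∫ x in t₀..t, deriv α x * (starRingEnd ℂ) (α x)), α t * ω s)

/-- The partial derivative `Φ_t`. -/
noncomputable def PhiT (α ω : ℝ → ℂ) (t₀ s₀ t s : ℝ) : ℂ × ℂ :=
  deriv (fun x => starProd α ω t₀ s₀ x s) t

/-- The partial derivative `Φ_s`. -/
noncomputable def PhiS (α ω : ℝ → ℂ) (t₀ s₀ t s : ℝ) : ℂ × ℂ :=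
  deriv (fun y => starProd α ω t₀ s₀ t y) s

lemma hasDerivAt_int_aux (f : ℝ → ℂ) (I : Set ℝ) (ho : IsOpen I) (hc : I.OrdConnected)
    (hf : ContDiffOn ℝ 1 f I) (t₀ t : ℝ) (ht₀ : t₀ ∈ I) (ht : t ∈ I) :
    HasDerivAt (fun x => ∫ y in t₀..x, deriv f y * (starRingEnd ℂ) (f y))
      (deriv f t * (starRingEnd ℂ) (f t)) t := by
  have h1 : ContinuousOn (deriv f) I := hf.continuousOn_deriv_of_isOpen ho le_rfl
  have h2 : ContinuousOn (fun y => deriv f y * (starRingEnd ℂ) (f y)) I :=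
    h1.mul (Complex.continuous_conj.comp_continuousOn hf.continuousOn)
  apply intervalIntegral.integral_hasDerivAt_right
  · exact (h2.mono (hc.uIcc_subset ht₀ ht)).intervalIntegrable
  · exact h2.stronglyMeasurableAtFilter ho t ht
  · exact h2.continuousAt (ho.mem_nhds ht)

/-- for regular generating curves, `Φ_t(t,s)` and `Φ_s(t,s)` are linearly
independent over `ℝ` in `ℂ² ≅ ℝ⁴` iff `(α(t), ω(s)) ≠ (0,0)`; in particular `Φ` is an
immersion when `α` and `ω` avoid the origin, and `(t*,s*)` is a singular point of `Φ`
iff `α(t*) = 0 = ω(s*)`. -/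
theorem statement2 (α ω : ℝ → ℂ) (I₁ I₂ : Set ℝ)
    (hI₁o : IsOpen I₁) (hI₁c : I₁.OrdConnected)
    (hI₂o : IsOpen I₂) (hI₂c : I₂.OrdConnected)
    (hα : ContDiffOn ℝ 1 α I₁) (hω : ContDiffOn ℝ 1 ω I₂)
    (hαr : ∀ t ∈ I₁, deriv α t ≠ 0) (hωr : ∀ s ∈ I₂, deriv ω s ≠ 0)
    (t₀ : ℝ) (ht₀ : t₀ ∈ I₁) (s₀ : ℝ) (hs₀ : s₀ ∈ I₂) :
    ∀ t ∈ I₁, ∀ s ∈ I₂,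
      LinearIndependent ℝ ![PhiT α ω t₀ s₀ t s, PhiS α ω t₀ s₀ t s] ↔
        ¬(α t = 0 ∧ ω s = 0) := by
  intro t ht s hs
  have dα : HasDerivAt α (deriv α t) t :=
    ((hα.differentiableOn (by norm_num)).differentiableAt (hI₁o.mem_nhds ht)).hasDerivAt
  have dω : HasDerivAt ω (deriv ω s) s :=
    ((hω.differentiableOn (by norm_num)).differentiableAt (hI₂o.mem_nhds hs)).hasDerivAt
  have hT : PhiT α ω t₀ s₀ t s =
      (-(deriv α t * (starRingEnd ℂ) (α t)), deriv α t * ω s) :=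
    HasDerivAt.deriv (((hasDerivAt_int_aux α I₁ hI₁o hI₁c hα t₀ t ht₀ ht).const_sub _).prodMk
      (dα.mul_const (ω s)))
  have hS : PhiS α ω t₀ s₀ t s =
      (deriv ω s * (starRingEnd ℂ) (ω s), α t * deriv ω s) :=
    HasDerivAt.deriv (((hasDerivAt_int_aux ω I₂ hI₂o hI₂c hω s₀ s hs₀ hs).sub_const _).prodMk
      (dω.const_mul (α t)))
  have hA := hαr t ht
  have hW := hωr s hs
  rw [hT, hS, LinearIndependent.pair_iff]
  generalize deriv α t = A at *
  generalize deriv ω s = W at *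
  generalize α t = a at *
  generalize ω s = w at *
  constructor
  · rintro h ⟨rfl, rfl⟩
    have := h 1 0 (by simp)
    simp at this
  · intro h x y hxy
    simp only [Prod.smul_mk, Prod.mk_add_mk, Prod.mk_eq_zero, Complex.real_smul] at hxy
    obtain ⟨e1, e2⟩ := hxy
    have key : (y : ℂ) * W * (a * (starRingEnd ℂ) a + w * (starRingEnd ℂ) w) = 0 := by
      linear_combination w * e1 + (starRingEnd ℂ) a * e2
    have hne : a * (starRingEnd ℂ) a + w * (starRingEnd ℂ) w ≠ 0 := by
      rw [Complex.mul_conj, Complex.mul_conj]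
      intro h0
      have h0' : Complex.normSq a + Complex.normSq w = 0 := by exact_mod_cast h0
      have := Complex.normSq_nonneg a
      have := Complex.normSq_nonneg w
      exact h ⟨Complex.normSq_eq_zero.1 (by linarith), Complex.normSq_eq_zero.1 (by linarith)⟩
    have hy : y = 0 := by simpa [hW, hne] using key
    subst hy
    refine ⟨?_, rfl⟩
    by_contra hx
    simp [hx, hA] at e1 e2
    exact h ⟨e1, e2⟩
end

section
/- Let a, b ∈ ℝ, α(t) = t + i·a, ω(s) = s + i·b, base points t₀ = s₀ = 0, and Φ = α∗ω. Define φ : ℂ² → ℂ² by φ(z₁, z₂) = (Im z₁ + i·Im z₂, Re z₁ − i·Re z₂). Then for all (t,s) ∈ ℝ², writing w = t + i·s, one has (φ∘Φ)(t,s) = ( (a + i·b)·w, −w²/2 + i·a·b ). In particular, if (a,b) ≠ (0,0), then φ∘Φ parametrizes (up to translation) the holomorphic graph z ↦ (z, c·z²) with c = −(a − i b)²/(2(a² + b²)²). -/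
open Complex

/-- The real-linear map `φ(z₁,z₂) = (Im z₁ + i·Im z₂, Re z₁ − i·Re z₂)` of `ℂ²`. -/
noncomputable def phiMap (z : ℂ × ℂ) : ℂ × ℂ :=
  ((z.1.im : ℂ) + (z.2.im : ℂ) * Complex.I, (z.1.re : ℂ) - (z.2.re : ℂ) * Complex.I)

theorem int_line (c s : ℝ) :
    (∫ y in (0 : ℝ)..s, deriv (fun y : ℝ => (y : ℂ) + (c : ℂ) * Complex.I) y *
      (starRingEnd ℂ) ((fun y : ℝ => (y : ℂ) + (c : ℂ) * Complex.I) y))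
      = (s : ℂ) ^ 2 / 2 - (c : ℂ) * Complex.I * s := by
  have hd : ∀ y : ℝ, HasDerivAt (fun y : ℝ => (y : ℂ) + (c : ℂ) * Complex.I) 1 y := fun y =>
    (Complex.ofRealCLM.hasDerivAt (x := y)).add_const _
  have hF : ∀ y : ℝ, HasDerivAt (fun y : ℝ => (y : ℂ) ^ 2 / 2 - (c : ℂ) * Complex.I * y)
      ((y : ℂ) - (c : ℂ) * Complex.I) y := by
    intro y
    have h1 : HasDerivAt (fun y : ℝ => (y : ℂ)) 1 y := Complex.ofRealCLM.hasDerivAt (x := y)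
    have h2 := ((h1.pow 2).div_const 2).sub (h1.const_mul ((c : ℂ) * Complex.I))
    refine h2.congr_deriv ?_
    simp
  have he : ∀ y : ℝ, deriv (fun y : ℝ => (y : ℂ) + (c : ℂ) * Complex.I) y *
      (starRingEnd ℂ) ((fun y : ℝ => (y : ℂ) + (c : ℂ) * Complex.I) y)
      = (y : ℂ) - (c : ℂ) * Complex.I := by
    intro y
    rw [(hd y).deriv]
    simp [sub_eq_add_neg]
  simp_rw [he]
  rw [intervalIntegral.integral_eq_sub_of_hasDerivAt (fun y _ => hF y)]
  · simp
  · exact Continuous.intervalIntegrable (by fun_prop) _ _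

theorem star_phi (a b t s : ℝ) :
      phiMap (starProd (fun x : ℝ => (x : ℂ) + (a : ℂ) * Complex.I)
          (fun y : ℝ => (y : ℂ) + (b : ℂ) * Complex.I) 0 0 t s)
        = (((a : ℂ) + (b : ℂ) * Complex.I) * ((t : ℂ) + (s : ℂ) * Complex.I),
            -((t : ℂ) + (s : ℂ) * Complex.I) ^ 2 / 2 + ((a * b : ℝ) : ℂ) * Complex.I) := by
  have hst : starProd (fun x : ℝ => (x : ℂ) + (a : ℂ) * Complex.I)
          (fun y : ℝ => (y : ℂ) + (b : ℂ) * Complex.I) 0 0 t s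
      = ((((s ^ 2 - t ^ 2) / 2 : ℝ) : ℂ) + ((a * t - b * s : ℝ) : ℂ) * Complex.I,
         ((t * s - a * b : ℝ) : ℂ) + ((a * s + b * t : ℝ) : ℂ) * Complex.I) := by
    unfold starProd
    rw [int_line, int_line]
    refine Prod.ext ?_ ?_
    · push_cast
      ring
    · push_cast
      linear_combination ((a : ℂ) * b) * Complex.I_sq
  rw [hst]
  unfold phiMap
  have key : ∀ x y : ℝ, ((x : ℂ) + (y : ℂ) * Complex.I).re = x ∧
      ((x : ℂ) + (y : ℂ) * Complex.I).im = y := fun x y => by simp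
  simp only [(key _ _).1, (key _ _).2]
  refine Prod.ext ?_ ?_
  · push_cast
    linear_combination (-(b : ℂ) * s) * Complex.I_sq
  · push_cast
    linear_combination ((s : ℂ) ^ 2 / 2) * Complex.I_sq

/-- with `α(t) = t + ia`, `ω(s) = s + ib` and `w = t + is`, one has
`(φ∘Φ)(t,s) = ((a+ib)w, −w²/2 + iab)`; in particular, for `(a,b) ≠ (0,0)`, `φ∘Φ`
parametrizes (up to translation) the holomorphic graph `z ↦ (z, cz²)` with
`c = −(a−ib)²/(2(a²+b²)²)`. -/
theorem statement7 (a b : ℝ) :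
    (∀ t s : ℝ,
      phiMap (starProd (fun x : ℝ => (x : ℂ) + (a : ℂ) * Complex.I)
          (fun y : ℝ => (y : ℂ) + (b : ℂ) * Complex.I) 0 0 t s)
        = (((a : ℂ) + (b : ℂ) * Complex.I) * ((t : ℂ) + (s : ℂ) * Complex.I),
            -((t : ℂ) + (s : ℂ) * Complex.I) ^ 2 / 2 + ((a * b : ℝ) : ℂ) * Complex.I)) ∧
    (¬(a = 0 ∧ b = 0) → ∀ t s : ℝ,
      phiMap (starProd (fun x : ℝ => (x : ℂ) + (a : ℂ) * Complex.I)
          (fun y : ℝ => (y : ℂ) + (b : ℂ) * Complex.I) 0 0 t s)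
        = (((a : ℂ) + (b : ℂ) * Complex.I) * ((t : ℂ) + (s : ℂ) * Complex.I),
            (-(((a : ℂ) - (b : ℂ) * Complex.I) ^ 2) /
                (2 * (((a : ℂ) ^ 2 + (b : ℂ) ^ 2) ^ 2))) *
              (((a : ℂ) + (b : ℂ) * Complex.I) * ((t : ℂ) + (s : ℂ) * Complex.I)) ^ 2 +
              ((a * b : ℝ) : ℂ) * Complex.I)) := by
  have main := star_phi a b
  refine ⟨main, fun h t s => ?_⟩
  rw [main t s]
  have hne : ((a : ℂ) ^ 2 + (b : ℂ) ^ 2) ≠ 0 := by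
    intro h0
    have h1 : a ^ 2 + b ^ 2 = 0 := by exact_mod_cast h0
    exact h ⟨by nlinarith [sq_nonneg a, sq_nonneg b], by nlinarith [sq_nonneg a, sq_nonneg b]⟩
  have hprod : ((a : ℂ) - (b : ℂ) * Complex.I) * ((a : ℂ) + (b : ℂ) * Complex.I)
      = (a : ℂ) ^ 2 + (b : ℂ) ^ 2 := by
    linear_combination (-(b : ℂ) ^ 2) * Complex.I_sq
  refine Prod.ext rfl ?_
  simp only
  congr 1
  rw [div_mul_eq_mul_div, mul_pow, neg_mul, ← mul_assoc, ← mul_pow, hprod]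
  field_simp
end

section
/- Let R > 0, a₁, a₂ ∈ ℝ, α(t) = a₁ + e^{it}, ω(s) = a₂ + R·e^{is/R}, base points t₀ = s₀ = 0. Then Φ = α∗ω is given for all (t,s) ∈ ℝ² by Φ(t,s) = ( a₂·R·e^{is/R} − a₁·e^{it} + i(R·s − t) + (a₁ − a₂·R), a₁·R·e^{is/R} + a₂·e^{it} + R·e^{i(t + s/R)} + a₁·a₂ ); i.e., up to a translation in ℂ², Φ(t,s) = ( a₂ R e^{is/R} − a₁ e^{it} + i(Rs − t), a₁ R e^{is/R} + a₂ e^{it} + R e^{i(t+s/R)} ). (These are Hamiltonian stationary Lagrangian surfaces: both κ_α and κ_ω are constant.) -/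
open Complex

theorem starProd_aux (R a : ℝ) (hR : 0 < R) (s : ℝ) :
    (∫ y in (0:ℝ)..s, deriv (fun y : ℝ => (a : ℂ) + (R : ℂ) * Complex.exp (((y / R : ℝ) : ℂ) * Complex.I)) y *
      (starRingEnd ℂ) ((a : ℂ) + (R : ℂ) * Complex.exp (((y / R : ℝ) : ℂ) * Complex.I))) =
    (a : ℂ) * R * Complex.exp (((s / R : ℝ) : ℂ) * Complex.I) - a * R + R * s * Complex.I := by
  have hR' : (R : ℂ) ≠ 0 := by exact_mod_cast hR.ne'
  have hE : ∀ y : ℝ, HasDerivAt (fun y : ℝ => Complex.exp (((y / R : ℝ) : ℂ) * Complex.I))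
      (Complex.exp (((y / R : ℝ) : ℂ) * Complex.I) * (((1 / R : ℝ) : ℂ) * Complex.I)) y := by
    intro y
    exact ((((hasDerivAt_id y).div_const R).ofReal_comp).mul_const Complex.I).cexp
  have hd : ∀ y : ℝ, deriv (fun y : ℝ => (a : ℂ) + (R : ℂ) * Complex.exp (((y / R : ℝ) : ℂ) * Complex.I)) y *
      (starRingEnd ℂ) ((a : ℂ) + (R : ℂ) * Complex.exp (((y / R : ℝ) : ℂ) * Complex.I)) =
      (a : ℂ) * Complex.I * Complex.exp (((y / R : ℝ) : ℂ) * Complex.I) + R * Complex.I := by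
    intro y
    rw [(((hE y).const_mul (R : ℂ)).const_add (a : ℂ)).deriv]
    have hc : Complex.exp (((y / R : ℝ) : ℂ) * Complex.I) *
        (starRingEnd ℂ) (Complex.exp (((y / R : ℝ) : ℂ) * Complex.I)) = 1 := by
      rw [Complex.mul_conj, Complex.normSq_eq_norm_sq, Complex.norm_exp_ofReal_mul_I]
      simp
    have h1 : (R : ℂ) * ((1 / R : ℝ) : ℂ) = 1 := by
      push_cast
      field_simp
    rw [map_add, map_mul, Complex.conj_ofReal, Complex.conj_ofReal]
    generalize (starRingEnd ℂ) (Complex.exp (((y / R : ℝ) : ℂ) * Complex.I)) = F at *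
    generalize Complex.exp (((y / R : ℝ) : ℂ) * Complex.I) = E at *
    generalize ((1 / R : ℝ) : ℂ) = r at *
    linear_combination (E * Complex.I * a + E * F * Complex.I * R) * h1 + Complex.I * R * hc
  simp_rw [hd]
  have hF : ∀ y : ℝ, HasDerivAt (fun y : ℝ => (a : ℂ) * R * Complex.exp (((y / R : ℝ) : ℂ) * Complex.I)
      + R * Complex.I * (y : ℂ))
      ((a : ℂ) * Complex.I * Complex.exp (((y / R : ℝ) : ℂ) * Complex.I) + R * Complex.I) y := by
    intro y
    have := ((hE y).const_mul ((a : ℂ) * R)).add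
      (((hasDerivAt_id y).ofReal_comp).const_mul ((R : ℂ) * Complex.I))
    refine this.congr_deriv ?_
    push_cast
    field_simp
  rw [intervalIntegral.integral_eq_sub_of_hasDerivAt (fun y _ => hF y)]
  · simp
    ring
  · apply Continuous.intervalIntegrable
    fun_prop

/-- for `α(t) = a₁ + e^{it}` and `ω(s) = a₂ + R e^{is/R}` (base points
`t₀ = s₀ = 0`), the Hamiltonian stationary Lagrangian `Φ = α ∗ ω` is given by
`Φ(t,s) = (a₂Re^{is/R} − a₁e^{it} + i(Rs − t) + (a₁ − a₂R),
           a₁Re^{is/R} + a₂e^{it} + Re^{i(t+s/R)} + a₁a₂)`. -/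
theorem statement12 (R a₁ a₂ : ℝ) (hR : 0 < R) :
    ∀ t s : ℝ,
      starProd (fun x : ℝ => (a₁ : ℂ) + Complex.exp ((x : ℂ) * Complex.I))
          (fun y : ℝ => (a₂ : ℂ) + (R : ℂ) * Complex.exp (((y / R : ℝ) : ℂ) * Complex.I))
          0 0 t s
        = ((a₂ : ℂ) * (R : ℂ) * Complex.exp (((s / R : ℝ) : ℂ) * Complex.I) -
              (a₁ : ℂ) * Complex.exp ((t : ℂ) * Complex.I) +
              (((R * s : ℝ) : ℂ) - (t : ℂ)) * Complex.I + ((a₁ : ℂ) - (a₂ : ℂ) * (R : ℂ)),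
            (a₁ : ℂ) * (R : ℂ) * Complex.exp (((s / R : ℝ) : ℂ) * Complex.I) +
              (a₂ : ℂ) * Complex.exp ((t : ℂ) * Complex.I) +
              (R : ℂ) * Complex.exp (((t : ℂ) + ((s / R : ℝ) : ℂ)) * Complex.I) +
              (a₁ : ℂ) * (a₂ : ℂ)) := by
  intro t s
  have h1 := starProd_aux R a₂ hR s
  have h2 := starProd_aux 1 a₁ one_pos t
  simp only [div_one, Complex.ofReal_one, one_mul, mul_one] at h2
  unfold starProd
  refine Prod.ext ?_ ?_
  · simp only []
    rw [h1, h2]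
    push_cast
    ring
  · simp only []
    rw [add_mul (t : ℂ), Complex.exp_add]
    ring
end

section
/- Let ρ > 0, λ ∈ ℝ, and let r : I → ℝ be a C² function on an interval I with r(t) > 0, r'(t)² < 1 and ρ²·r(t)² ≥ λ for all t ∈ I. Suppose r satisfies 1 − r'(t)² − r(t)·r''(t) = r(t)·√( (ρ²r(t)² − λ)(1 − r'(t)²) ) on I. Then r satisfies the squared equation (1 − r'² − r·r'')² = (ρ²r² − λ)·r²·(1 − r'²) on I, and there exists a constant μ ∈ ℝ such that (ρ²·r(t)² − λ)^{3/2}/ρ² + μ = 3·r(t)·√(1 − r'(t)²) for all t ∈ I; i.e. this expression is a first integral of the ODE. -/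
/-- if a positive `C²` function `r` on an interval `I`, with `r'² < 1`
and `ρ²r² ≥ λ`, satisfies `1 − r'² − r r'' = r √((ρ²r² − λ)(1 − r'²))`, then it
satisfies the squared equation `(1 − r'² − r r'')² = (ρ²r² − λ) r² (1 − r'²)` and
there is a constant `μ` with `(ρ²r² − λ)^{3/2}/ρ² + μ = 3 r √(1 − r'²)` on `I`,
i.e. the latter expression is a first integral of the ODE. -/
theorem statement14 (ρ lam : ℝ) (hρ : 0 < ρ) (I : Set ℝ) (hI : I.OrdConnected)
    (r r' r'' : ℝ → ℝ)
    (hr' : ∀ t ∈ I, HasDerivAt r (r' t) t)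
    (hr'' : ∀ t ∈ I, HasDerivAt r' (r'' t) t)
    (hr''c : ContinuousOn r'' I)
    (hpos : ∀ t ∈ I, 0 < r t)
    (hlt : ∀ t ∈ I, r' t ^ 2 < 1)
    (hge : ∀ t ∈ I, lam ≤ ρ ^ 2 * r t ^ 2)
    (hode : ∀ t ∈ I,
      1 - r' t ^ 2 - r t * r'' t
        = r t * Real.sqrt ((ρ ^ 2 * r t ^ 2 - lam) * (1 - r' t ^ 2))) :
    (∀ t ∈ I,
      (1 - r' t ^ 2 - r t * r'' t) ^ 2
        = (ρ ^ 2 * r t ^ 2 - lam) * r t ^ 2 * (1 - r' t ^ 2)) ∧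
    ∃ μ : ℝ, ∀ t ∈ I,
      (ρ ^ 2 * r t ^ 2 - lam) ^ ((3 : ℝ) / 2) / ρ ^ 2 + μ
        = 3 * (r t * Real.sqrt (1 - r' t ^ 2)) := by
  refine ⟨fun t ht => ?_, ?_⟩
  · rw [hode t ht, mul_pow, Real.sq_sqrt]
    · ring
    · exact mul_nonneg (by linarith [hge t ht]) (by linarith [hlt t ht])
  have hder : ∀ t ∈ I, HasDerivWithinAt (fun t => 3 * (r t * Real.sqrt (1 - r' t ^ 2))
      - (ρ ^ 2 * r t ^ 2 - lam) ^ ((3 : ℝ) / 2) / ρ ^ 2) 0 I t := by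
    intro t ht
    have h1 := hr' t ht
    have h2 := hr'' t ht
    have hw : 0 < 1 - r' t ^ 2 := by linarith [hlt t ht]
    have hu : 0 ≤ ρ ^ 2 * r t ^ 2 - lam := by linarith [hge t ht]
    have hA := (((h1.pow 2).const_mul (ρ ^ 2)).sub_const lam).rpow_const
      (p := (3 : ℝ) / 2) (Or.inr (by norm_num))
    have hB := ((h2.pow 2).const_sub 1).sqrt hw.ne'
    have hC := ((h1.mul hB).const_mul 3).sub (hA.div_const (ρ ^ 2))
    refine (HasDerivAt.congr_deriv hC ?_).hasDerivWithinAt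
    have ho := hode t ht
    rw [Real.sqrt_mul hu] at ho
    have e : ((3 : ℝ) / 2 - 1) = 1 / 2 := by norm_num
    simp only [Pi.pow_apply, e, ← Real.sqrt_eq_rpow]
    have hs : 0 < Real.sqrt (1 - r' t ^ 2) := Real.sqrt_pos.2 hw
    have hsq : Real.sqrt (1 - r' t ^ 2) ^ 2 = 1 - r' t ^ 2 := Real.sq_sqrt hw.le
    generalize Real.sqrt (1 - r' t ^ 2) = w at *
    generalize Real.sqrt (ρ ^ 2 * r t ^ 2 - lam) = v at *
    push_cast
    field_simp
    linear_combination (3 * r' t) * ho + (3 * r' t) * hsq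
  rcases I.eq_empty_or_nonempty with rfl | ⟨a, ha⟩
  · exact ⟨0, fun t ht => absurd ht (Set.notMem_empty t)⟩
  refine ⟨3 * (r a * Real.sqrt (1 - r' a ^ 2))
      - (ρ ^ 2 * r a ^ 2 - lam) ^ ((3 : ℝ) / 2) / ρ ^ 2, fun t ht => ?_⟩
  have h := Convex.norm_image_sub_le_of_norm_hasDerivWithin_le (C := 0) hder
    (fun x _ => by simp) hI.convex ha ht
  rw [zero_mul, norm_le_zero_iff] at h
  linarith
end

section
/- Let α : ℝ → ℂ\{0} and ω : ℝ → ℂ\{0} be regular C¹ curves that are periodic with periods T > 0 and S > 0 respectively, and suppose ∫₀^T Im( α'(x)·conj(α(x)) ) dx = 0 and ∫₀^S Im( ω'(y)·conj(ω(y)) ) dy = 0. Then the Lagrangian immersion Φ = α∗ω is doubly periodic: Φ(t + T, s) = Φ(t, s) = Φ(t, s + S) for all (t,s) ∈ ℝ² (hence Φ gives rise to a Lagrangian torus). -/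
open Complex

theorem star_aux (a : ℝ → ℂ) (T : ℝ) (ha : ContDiff ℝ 1 a) (hp : Function.Periodic a T)
    (hint : (∫ x in (0:ℝ)..T, (deriv a x * (starRingEnd ℂ) (a x)).im) = 0) (t₀ t : ℝ) :
    (∫ x in t₀..(t + T), deriv a x * (starRingEnd ℂ) (a x)) =
      ∫ x in t₀..t, deriv a x * (starRingEnd ℂ) (a x) := by
  have hd : Continuous (deriv a) := ha.continuous_deriv le_rfl
  have hc : Continuous (fun x => (starRingEnd ℂ) (a x)) :=
    Complex.continuous_conj.comp ha.continuous
  have hf : Continuous (fun x => deriv a x * (starRingEnd ℂ) (a x)) := hd.mul hc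
  have hdp : Function.Periodic (deriv a) T := by
    intro x
    have h := deriv_comp_add_const a T x
    rw [← h]
    congr 1
    funext y
    exact hp y
  have hfp : Function.Periodic (fun x => deriv a x * (starRingEnd ℂ) (a x)) T := by
    intro x
    simp only [hp x, hdp x]
  have hre : (∫ x in (0:ℝ)..T, (deriv a x * (starRingEnd ℂ) (a x)).re) = 0 := by
    have key : ∀ x ∈ Set.uIcc 0 T, HasDerivAt (fun x => ‖a x‖ ^ 2)
        (2 * (deriv a x * (starRingEnd ℂ) (a x)).re) x := by
      intro x _
      have h := ((ha.differentiable one_ne_zero) x).hasDerivAt.norm_sq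
      convert h using 1
      rw [Complex.inner]
    have h2 := intervalIntegral.integral_eq_sub_of_hasDerivAt key
      ((continuous_const.mul (Complex.continuous_re.comp hf)).intervalIntegrable _ _)
    rw [intervalIntegral.integral_const_mul] at h2
    have h3 : a T = a 0 := by simpa using hp 0
    rw [h3, sub_self] at h2
    linarith
  have h0 : (∫ x in (0:ℝ)..T, deriv a x * (starRingEnd ℂ) (a x)) = 0 := by
    have hi := hf.intervalIntegrable (μ := MeasureTheory.volume) 0 T
    apply Complex.ext
    · have := Complex.reCLM.intervalIntegral_comp_comm hi
      simp only [Complex.reCLM_apply] at this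
      rw [← this, hre, Complex.zero_re]
    · have := Complex.imCLM.intervalIntegral_comp_comm hi
      simp only [Complex.imCLM_apply] at this
      rw [← this, hint, Complex.zero_im]
  have h1 := hfp.intervalIntegral_add_eq t 0
  rw [zero_add, h0] at h1
  rw [← intervalIntegral.integral_add_adjacent_intervals (hf.intervalIntegrable t₀ t)
    (hf.intervalIntegrable t (t + T)), h1, add_zero]

/-- if `α`, `ω` are regular periodic planar curves avoiding the origin,
with periods `T`, `S`, such that `∫₀^T Im(α'·conj(α)) = 0 = ∫₀^S Im(ω'·conj(ω))`,
then `Φ = α ∗ ω` is doubly periodic: `Φ(t+T,s) = Φ(t,s) = Φ(t,s+S)` (hence gives a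
Lagrangian torus). -/
theorem statement18 (α ω : ℝ → ℂ) (T S : ℝ) (hT : 0 < T) (hS : 0 < S)
    (hα : ContDiff ℝ 1 α) (hω : ContDiff ℝ 1 ω)
    (hα0 : ∀ t, α t ≠ 0) (hω0 : ∀ s, ω s ≠ 0)
    (hαr : ∀ t, deriv α t ≠ 0) (hωr : ∀ s, deriv ω s ≠ 0)
    (hαp : Function.Periodic α T) (hωp : Function.Periodic ω S)
    (hαint : (∫ x in (0:ℝ)..T, (deriv α x * (starRingEnd ℂ) (α x)).im) = 0)
    (hωint : (∫ y in (0:ℝ)..S, (deriv ω y * (starRingEnd ℂ) (ω y)).im) = 0)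
    (t₀ s₀ : ℝ) :
    ∀ t s : ℝ,
      starProd α ω t₀ s₀ (t + T) s = starProd α ω t₀ s₀ t s ∧
      starProd α ω t₀ s₀ t (s + S) = starProd α ω t₀ s₀ t s := by
  intro t s
  simp only [starProd, star_aux α T hα hαp hαint, star_aux ω S hω hωp hωint, hαp t, hωp s,
    and_self]
end

section
/- Let α(t) = (1 + 2cos t) + i·(2 cos t sin t) (the Gerono lemniscate translated so as to avoid the origin) and ω(s) = sin s + i·sin(2s) (a Lissajous curve), both 2π-periodic. Then ∫₀^{2π} Im( α'(t)·conj(α(t)) ) dt = 0 and ∫₀^{2π} Im( ω'(s)·conj(ω(s)) ) ds = 0; consequently the map Φ = α∗ω (with base points t₀ = s₀ = 0) satisfies Φ(t + 2π, s) = Φ(t, s) = Φ(t, s + 2π) for all (t,s) ∈ ℝ², i.e. Φ is doubly periodic and defines a Lagrangian torus in ℂ². -/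
open Complex

/-- The translated Gerono lemniscate `α(t) = (1 + 2cos t) + i·(2 cos t sin t)`. -/
noncomputable def gerono (t : ℝ) : ℂ :=
  ((1 + 2 * Real.cos t : ℝ) : ℂ) + ((2 * Real.cos t * Real.sin t : ℝ) : ℂ) * Complex.I

/-- The Lissajous curve `ω(s) = sin s + i·sin (2s)`. -/
noncomputable def lissajous (s : ℝ) : ℂ :=
  ((Real.sin s : ℝ) : ℂ) + ((Real.sin (2 * s) : ℝ) : ℂ) * Complex.I

theorem curve_aux (f : ℝ → ℂ) (x y x' y' A : ℝ → ℝ)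
    (hf : ∀ t, f t = ((x t : ℝ) : ℂ) + ((y t : ℝ) : ℂ) * Complex.I)
    (hx : ∀ t, HasDerivAt x (x' t) t) (hy : ∀ t, HasDerivAt y (y' t) t)
    (hA : ∀ t, HasDerivAt A (y' t * x t - x' t * y t) t)
    (cx : Continuous x') (cy : Continuous y')
    (px : ∀ t, x (t + 2 * Real.pi) = x t) (py : ∀ t, y (t + 2 * Real.pi) = y t)
    (pA : ∀ t, A (t + 2 * Real.pi) = A t) :
    (∫ t in (0:ℝ)..(2 * Real.pi), (deriv f t * (starRingEnd ℂ) (f t)).im) = 0 ∧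
    (∀ t, f (t + 2 * Real.pi) = f t) ∧
    ∀ t, (∫ u in (0:ℝ)..(t + 2 * Real.pi), deriv f u * (starRingEnd ℂ) (f u)) =
      ∫ u in (0:ℝ)..t, deriv f u * (starRingEnd ℂ) (f u) := by
  have cx0 : Continuous x := continuous_iff_continuousAt.2 fun t => (hx t).continuousAt
  have cy0 : Continuous y := continuous_iff_continuousAt.2 fun t => (hy t).continuousAt
  have hd : ∀ t, deriv f t = ((x' t : ℝ) : ℂ) + ((y' t : ℝ) : ℂ) * Complex.I := by
    intro t
    rw [funext hf]
    exact ((hx t).ofReal_comp.add ((hy t).ofReal_comp.mul_const Complex.I)).deriv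
  have hp : ∀ t, deriv f t * (starRingEnd ℂ) (f t) =
      ((x t * x' t + y t * y' t : ℝ) : ℂ)
        + ((y' t * x t - x' t * y t : ℝ) : ℂ) * Complex.I := by
    intro t
    rw [hd, hf]
    apply Complex.ext <;> simp <;> ring
  refine ⟨?_, ?_, ?_⟩
  · have h1 : ∀ t, (deriv f t * (starRingEnd ℂ) (f t)).im = y' t * x t - x' t * y t := by
      intro t
      rw [hp]
      simp
    simp only [h1]
    rw [intervalIntegral.integral_eq_sub_of_hasDerivAt (fun t _ => hA t)
      (Continuous.intervalIntegrable (by fun_prop) _ _)]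
    have := pA 0
    rw [zero_add] at this
    rw [this, sub_self]
  · intro t
    rw [hf, hf, px, py]
  · intro t
    have hR : ∀ u, HasDerivAt (fun u => (x u * x u + y u * y u) / 2)
        (x u * x' u + y u * y' u) u := by
      intro u
      have h := (((hx u).mul (hx u)).add ((hy u).mul (hy u))).div_const 2
      refine h.congr_deriv ?_
      ring
    have hF : ∀ u, HasDerivAt (fun u => (((x u * x u + y u * y u) / 2 : ℝ) : ℂ)
        + ((A u : ℝ) : ℂ) * Complex.I)
        (((x u * x' u + y u * y' u : ℝ) : ℂ)
        + ((y' u * x u - x' u * y u : ℝ) : ℂ) * Complex.I) u := fun u =>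
      (hR u).ofReal_comp.add ((hA u).ofReal_comp.mul_const Complex.I)
    simp only [hp]
    rw [intervalIntegral.integral_eq_sub_of_hasDerivAt (fun u _ => hF u)
        (Continuous.intervalIntegrable (by fun_prop) _ _),
      intervalIntegral.integral_eq_sub_of_hasDerivAt (fun u _ => hF u)
        (Continuous.intervalIntegrable (by fun_prop) _ _)]
    simp only [px, py, pA]

/-- for the Gerono lemniscate `α` and the Lissajous curve `ω` (both
`2π`-periodic), `∫₀^{2π} Im(α'·conj(α)) = 0 = ∫₀^{2π} Im(ω'·conj(ω))`; consequently
`Φ = α ∗ ω` (base points `t₀ = s₀ = 0`) is doubly periodic,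
`Φ(t+2π,s) = Φ(t,s) = Φ(t,s+2π)`, and defines a Lagrangian torus in `ℂ²`. -/
theorem statement19 :
    (∫ t in (0:ℝ)..(2 * Real.pi), (deriv gerono t * (starRingEnd ℂ) (gerono t)).im) = 0 ∧
    (∫ s in (0:ℝ)..(2 * Real.pi), (deriv lissajous s * (starRingEnd ℂ) (lissajous s)).im) = 0 ∧
    ∀ t s : ℝ,
      starProd gerono lissajous 0 0 (t + 2 * Real.pi) s = starProd gerono lissajous 0 0 t s ∧
      starProd gerono lissajous 0 0 t (s + 2 * Real.pi) = starProd gerono lissajous 0 0 t s := by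
  have hs := Real.hasDerivAt_sin
  have hc := Real.hasDerivAt_cos
  obtain ⟨g1, g2, g3⟩ := curve_aux gerono (fun t => 1 + 2 * Real.cos t)
    (fun t => 2 * Real.cos t * Real.sin t) (fun t => -2 * Real.sin t)
    (fun t => 4 * Real.cos t ^ 2 - 2)
    (fun t => 2 * Real.sin t * Real.cos t + 4 * Real.sin t - 4 / 3 * Real.sin t ^ 3)
    (fun t => rfl)
    (fun t => (((hc t).const_mul 2).const_add 1).congr_deriv (by ring))
    (fun t => (((hc t).const_mul 2).mul (hs t)).congr_deriv (by
      have := Real.sin_sq t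
      linear_combination (-2) * this))
    (fun t => ((((((hs t).const_mul 2).mul (hc t)).add ((hs t).const_mul 4)).sub
      (((hs t).pow 3).const_mul (4 / 3))).congr_deriv (by
        have := Real.sin_sq t
        push_cast
        linear_combination (-2 - 8 * Real.cos t) * this)))
    (by fun_prop) (by fun_prop) (fun t => by simp) (fun t => by simp) (fun t => by simp)
  obtain ⟨l1, l2, l3⟩ := curve_aux lissajous (fun t => Real.sin t)
    (fun t => Real.sin (2 * t)) (fun t => Real.cos t)
    (fun t => 4 * Real.cos t ^ 2 - 2)
    (fun t => 2 * Real.cos t - 2 / 3 * Real.cos t ^ 3)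
    (fun t => rfl) hs
    (fun t => (((hasDerivAt_id t).const_mul 2).sin).congr_deriv (by
      simp only [id, Real.cos_two_mul]
      ring))
    (fun t => (((hc t).const_mul 2).sub (((hc t).pow 3).const_mul (2 / 3))).congr_deriv (by
        simp only [Real.sin_two_mul]
        push_cast
        ring))
    (by fun_prop) (by fun_prop) (fun t => by simp)
    (fun t => by
      simp only [Real.sin_two_mul, Real.sin_add_two_pi, Real.cos_add_two_pi])
    (fun t => by simp)
  refine ⟨g1, l1, fun t s => ⟨?_, ?_⟩⟩
  · simp only [starProd, g2, g3]
  · simp only [starProd, l2, l3]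
end
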